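/- Let Q be a routing matrix and let (e(0), f(0)) ∈ 𝒯. Then there exists exactly one fluid model solution (e, f, u) with initial condition (e(0), f(0)); that is, there exists exactly one triple of continuous functions e, f : [0,∞) → ℝ^{r×r} with (e(t), f(t)) ∈ 𝒯 for all t, and u : [0,∞) → ℝ_{≥0}^r, satisfying the fluid model equations with this initial condition. -/

import Mathlib

open Finset Filter Topology MeasureTheory intervalIntegral

abbrev Mat (r : ℕ) := Fin r → Fin r → ℝ

structure NetParams (r : ℕ) where
  lam : Fin r → ℝ
  mu : Mat r
  P : Mat r
  lam_pos : ∀ i, 0 < lam i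
  mu_pos : ∀ i j, 0 < mu i j
  P_nonneg : ∀ i j, 0 ≤ P i j
  P_rowsum : ∀ i, ∑ j, P i j = 1

def IsRouting {r : ℕ} (q : Mat r) : Prop :=
  (∀ i j, 0 ≤ q i j) ∧ ∀ i, ∑ j, q i j = 1

def MemT {r : ℕ} (e f : Mat r) : Prop :=
  (∀ i j, e i j ∈ Set.Icc (0:ℝ) 1) ∧ (∀ i j, f i j ∈ Set.Icc (0:ℝ) 1) ∧
    (∑ i, ∑ j, (e i j + f i j)) = 1

open scoped Classical in
/-- The Lebesgue–Stieltjes measure associated with a non-decreasing `g : ℝ → ℝ`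
(junk value `0` if `g` is not monotone). -/
noncomputable def lsMeasure (g : ℝ → ℝ) : Measure ℝ :=
  if h : Monotone g then h.stieltjesFunction.measure else 0

/-- A fluid model solution `(e, f, u)` for the ridesharing network with static
routing matrix `Q`.  All functions are defined on `ℝ`, but only their values
on `[0, ∞)` are relevant; `u` is extended by `0` on `(-∞, 0]`. -/
structure IsFluidSol {r : ℕ} (np : NetParams r) (Q : Mat r) (e f : ℝ → Mat r)
    (u : ℝ → Fin r → ℝ) : Prop where
  cont_e : ∀ i j, ContinuousOn (fun t => e t i j) (Set.Ici 0)
  cont_f : ∀ i j, ContinuousOn (fun t => f t i j) (Set.Ici 0)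
  mem_T : ∀ t, 0 ≤ t → MemT (e t) (f t)
  u_nonneg : ∀ t i, 0 ≤ u t i
  u_mono : ∀ i, Monotone fun t => u t i
  u_zero : ∀ i, ∀ t ≤ (0:ℝ), u t i = 0
  eq_f : ∀ i j, ∀ t, 0 ≤ t →
    f t i j = f 0 i j + np.lam i * np.P i j * (t - u t i)
      - np.mu i j * ∫ s in (0:ℝ)..t, f s i j
  eq_e_off : ∀ i j, i ≠ j → ∀ t, 0 ≤ t →
    e t i j = e 0 i j - np.mu i j * (∫ s in (0:ℝ)..t, e s i j)
      + Q i j * ∑ k, np.mu k i * ∫ s in (0:ℝ)..t, f s k i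
  eq_e_diag : ∀ i, ∀ t, 0 ≤ t →
    e t i i = e 0 i i - np.lam i * (t - u t i)
      + (∑ j ∈ Finset.univ.filter (fun j => j ≠ i), np.mu j i * ∫ s in (0:ℝ)..t, e s j i)
      + Q i i * ∑ j, np.mu j i * ∫ s in (0:ℝ)..t, f s j i
  compl : ∀ i, ∫⁻ s in Set.Ici (0:ℝ),
      ENNReal.ofReal (e s i i) ∂(lsMeasure fun t => u t i) = 0

open scoped Classical in
/-- The equilibrium set ℰ associated to the routing matrix `Q`. -/
noncomputable def eqSet {r : ℕ} (np : NetParams r) (Q : Mat r) : Set (Mat r × Mat r) :=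
  {p | MemT p.1 p.2 ∧ ∃ a : Fin r → ℝ, (∀ i, 0 ≤ a i ∧ a i ≤ 1) ∧
    (∀ i j, np.lam i * np.P i j * a i = np.mu i j * p.2 i j) ∧
    (∀ i j, i ≠ j → np.mu i j * p.1 i j = Q i j * ∑ k, np.mu k i * p.2 k i) ∧
    (∀ i, np.lam i * a i =
      (∑ k ∈ Finset.univ.filter (fun k => k ≠ i), np.mu k i * p.1 k i)
        + Q i i * ∑ k, np.mu k i * p.2 k i) ∧
    (∀ i, (1 - a i) * p.1 i i = 0)}

/-!
Write `D_i t = λ_i (t - u_i t)` for the cumulative number of full cars that have left `i`. Given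
`D`, the equations for `f` and for `e` off the diagonal are linear and explicitly solvable, so the
cumulative number of cars that become available at `i` is a functional of `D`. The remaining
equation for `e_ii`, with its complementarity condition, is a one-dimensional Skorokhod problem,
and it determines `D` from these inputs. A fluid model solution is therefore the same as a fixed
point `D` of the composite map. The Skorokhod map is 1-Lipschitz for running suprema, whereas the
travel stages average over the past: in the norm `sup exp (-b t) |D t|` they have Lipschitz
constant at most `μ / b`. For `b` large the composite is a contraction, which gives existence and
uniqueness at once.
-/

/-! ### A weighted contraction principle -/

section WeightedContraction

variable {X Y : Type*} [MetricSpace Y] {S : Set (X → Y)} {Φ : (X → Y) → X → Y} {w : X → ℝ}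
  {C θ : ℝ}

lemma dist_iterate_le_of_weighted_contraction (hΦ : Set.MapsTo Φ S S) (hC : 0 ≤ C) (hθ : 0 ≤ θ)
    (hbound : ∀ D ∈ S, ∀ E ∈ S, ∀ x, dist (D x) (E x) ≤ C * w x)
    (hcontr : ∀ D ∈ S, ∀ E ∈ S, ∀ K, 0 ≤ K → (∀ x, dist (D x) (E x) ≤ K * w x) →
      ∀ x, dist (Φ D x) (Φ E x) ≤ θ * K * w x) {D E : X → Y} (hD : D ∈ S) (hE : E ∈ S) (n : ℕ)
    (x : X) : dist (Φ^[n] D x) (Φ^[n] E x) ≤ C * w x * θ ^ n := by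
  induction n generalizing x with
  | zero => simpa using hbound D hD E hE x
  | succ n ih =>
    rw [Function.iterate_succ_apply', Function.iterate_succ_apply']
    exact (hcontr _ (hΦ.iterate n hD) _ (hΦ.iterate n hE) (C * θ ^ n) (by positivity)
      (fun y => (ih y).trans_eq (by ring)) x).trans_eq (by ring)

theorem existsUnique_isFixedPt_of_weighted_contraction [CompleteSpace Y] (hS : IsClosed S)
    (hne : S.Nonempty) (hΦ : Set.MapsTo Φ S S) (hC : 0 ≤ C) (hθ0 : 0 ≤ θ) (hθ1 : θ < 1)
    (hbound : ∀ D ∈ S, ∀ E ∈ S, ∀ x, dist (D x) (E x) ≤ C * w x)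
    (hcontr : ∀ D ∈ S, ∀ E ∈ S, ∀ K, 0 ≤ K → (∀ x, dist (D x) (E x) ≤ K * w x) →
      ∀ x, dist (Φ D x) (Φ E x) ≤ θ * K * w x) :
    ∃! D, D ∈ S ∧ Function.IsFixedPt Φ D := by
  have hiter {D E : X → Y} (hD : D ∈ S) (hE : E ∈ S) :=
    dist_iterate_le_of_weighted_contraction hΦ hC hθ0 hbound hcontr hD hE
  have hpow (c : ℝ) : Tendsto (fun n : ℕ => c * θ ^ n) atTop (𝓝 0) := by
    simpa using (tendsto_pow_atTop_nhds_zero_of_lt_one hθ0 hθ1).const_mul c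
  obtain ⟨D₀, hD₀⟩ := hne
  have hstep (x : X) (n : ℕ) :
      dist (Φ^[n] D₀ x) (Φ^[n + 1] D₀ x) ≤ C * w x * θ ^ n := by
    rw [Function.iterate_succ_apply]
    exact hiter hD₀ (hΦ hD₀) n x
  choose L hL using fun x =>
    cauchySeq_tendsto_of_complete (cauchySeq_of_le_geometric θ _ hθ1 (hstep x))
  have hLS : L ∈ S := hS.mem_of_tendsto (tendsto_pi_nhds.2 hL)
    (Eventually.of_forall fun n => hΦ.iterate n hD₀)
  have hdistL (n : ℕ) (x : X) : dist (Φ^[n] D₀ x) (L x) ≤ C * θ ^ n / (1 - θ) * w x :=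
    (dist_le_of_le_geometric_of_tendsto θ _ hθ1 (hstep x) (hL x) n).trans_eq (by ring)
  have hΦL : Function.IsFixedPt Φ L := funext fun x => by
    have hlim : Tendsto (fun n => Φ^[n + 1] D₀ x) atTop (𝓝 (Φ L x)) := by
      refine tendsto_iff_dist_tendsto_zero.2 (squeeze_zero (fun _ => dist_nonneg) (fun n => ?_)
        (hpow (θ * C / (1 - θ) * w x)))
      rw [Function.iterate_succ_apply']
      exact (hcontr _ (hΦ.iterate n hD₀) L hLS _
        (div_nonneg (by positivity) (sub_nonneg.2 hθ1.le)) (hdistL n) x).trans_eq (by ring)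
    exact tendsto_nhds_unique hlim ((tendsto_add_atTop_iff_nat 1).2 (hL x))
  refine ⟨L, ⟨hLS, hΦL⟩, fun E ⟨hES, hE⟩ => funext fun x => dist_le_zero.1 ?_⟩
  refine ge_of_tendsto' (hpow (C * w x)) fun n => ?_
  simpa only [Function.iterate_fixed hE, Function.iterate_fixed hΦL] using hiter hES hLS n x

end WeightedContraction

/-! ### Cumulative input paths and exponential service -/

/-- Cumulative amount that has entered some place by time `t`, including an initial stock `x 0`.
Only the values on `[0, ∞)` matter, but `x` is required to be continuous on all of `ℝ`. -/
structure IsCumulative (x : ℝ → ℝ) : Prop where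
  continuous : Continuous x
  monotoneOn : MonotoneOn x (Set.Ici 0)
  zero_nonneg : 0 ≤ x 0

namespace IsCumulative

variable {x y : ℝ → ℝ}

lemma nonneg (hx : IsCumulative x) {t : ℝ} (ht : 0 ≤ t) : 0 ≤ x t :=
  hx.zero_nonneg.trans (hx.monotoneOn Set.self_mem_Ici ht ht)

lemma const {c : ℝ} (hc : 0 ≤ c) : IsCumulative fun _ => c :=
  ⟨continuous_const, monotoneOn_const, hc⟩

lemma add (hx : IsCumulative x) (hy : IsCumulative y) : IsCumulative fun t => x t + y t :=
  ⟨hx.continuous.add hy.continuous, hx.monotoneOn.add hy.monotoneOn,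
    add_nonneg hx.zero_nonneg hy.zero_nonneg⟩

lemma const_mul (hx : IsCumulative x) {c : ℝ} (hc : 0 ≤ c) : IsCumulative fun t => c * x t :=
  ⟨hx.continuous.const_mul c,
    fun _ hs _ ht hst => mul_le_mul_of_nonneg_left (hx.monotoneOn hs ht hst) hc,
    mul_nonneg hc hx.zero_nonneg⟩

lemma sum {ι : Type*} {s : Finset ι} {x : ι → ℝ → ℝ} (hx : ∀ i ∈ s, IsCumulative (x i)) :
    IsCumulative fun t => ∑ i ∈ s, x i t :=
  ⟨continuous_finsetSum _ fun i hi => (hx i hi).continuous,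
    fun _ hs _ ht hst => Finset.sum_le_sum fun i hi => (hx i hi).monotoneOn hs ht hst,
    Finset.sum_nonneg fun i hi => (hx i hi).zero_nonneg⟩

end IsCumulative

/-- Cumulative output of an infinite-server station with exponential rate `m` and cumulative
input `x`: the solution of `y' = m * (x - y)`, `y 0 = 0`. -/
noncomputable def expFilter (m : ℝ) (x : ℝ → ℝ) (t : ℝ) : ℝ :=
  Real.exp (-(m * t)) * ∫ s in (0 : ℝ)..t, m * Real.exp (m * s) * x s

section ExpFilter

variable {m : ℝ} {x y : ℝ → ℝ}

@[simp]
lemma expFilter_zero (m : ℝ) (x : ℝ → ℝ) : expFilter m x 0 = 0 := by simp [expFilter]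

lemma exp_neg_mul_exp (a : ℝ) : Real.exp (-a) * Real.exp a = 1 := by simp [← Real.exp_add]

lemma hasDerivAt_exp_const_mul (m t : ℝ) :
    HasDerivAt (fun s => Real.exp (m * s)) (m * Real.exp (m * t)) t := by
  simpa [mul_comm] using ((hasDerivAt_id t).const_mul m).exp

lemma hasDerivAt_expFilter (m : ℝ) (hx : Continuous x) (t : ℝ) :
    HasDerivAt (expFilter m x) (m * (x t - expFilter m x t)) t := by
  have hdecay : HasDerivAt (fun s => Real.exp (-(m * s))) (-m * Real.exp (-(m * t))) t := by
    simpa only [neg_mul] using hasDerivAt_exp_const_mul (-m) t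
  have hprim : HasDerivAt (fun t => ∫ s in (0 : ℝ)..t, m * Real.exp (m * s) * x s)
      (m * Real.exp (m * t) * x t) t :=
    ((by fun_prop : Continuous fun s => m * Real.exp (m * s) * x s).integral_hasStrictDerivAt
      0 t).hasDerivAt
  refine (hdecay.mul hprim).congr_deriv ?_
  simp only [expFilter]
  linear_combination m * x t * exp_neg_mul_exp (m * t)

lemma continuous_expFilter (m : ℝ) (hx : Continuous x) : Continuous (expFilter m x) :=
  continuous_iff_continuousAt.2 fun t => (hasDerivAt_expFilter m hx t).continuousAt

lemma mul_integral_sub_expFilter (m : ℝ) (hx : Continuous x) (t : ℝ) :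
    m * ∫ s in (0 : ℝ)..t, (x s - expFilter m x s) = expFilter m x t := by
  have hcont := continuous_expFilter m hx
  rw [← intervalIntegral.integral_const_mul,
    intervalIntegral.integral_eq_sub_of_hasDerivAt (fun s _ => hasDerivAt_expFilter m hx s)
      (Continuous.intervalIntegrable (by fun_prop) _ _), expFilter_zero, sub_zero]

lemma intervalIntegrable_of_continuousOn_Ici {g : ℝ → ℝ} (hg : ContinuousOn g (Set.Ici 0))
    {t : ℝ} (ht : 0 ≤ t) : IntervalIntegrable g volume 0 t :=
  (hg.mono (Set.uIcc_of_le ht ▸ Set.Icc_subset_Ici_self)).intervalIntegrable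

lemma continuousOn_primitive_Ici {g : ℝ → ℝ} (hg : ContinuousOn g (Set.Ici 0)) :
    ContinuousOn (fun t => ∫ s in (0 : ℝ)..t, g s) (Set.Ici 0) := by
  have hext : Continuous fun s => g (max s 0) :=
    hg.comp_continuous (by fun_prop) fun s => le_max_right s 0
  refine (intervalIntegral.continuous_primitive
    (fun a b => hext.intervalIntegrable (μ := volume) a b) 0).continuousOn.congr fun t ht => ?_
  refine intervalIntegral.integral_congr fun s hs => ?_
  rw [Set.uIcc_of_le ht] at hs
  simp only [max_eq_left hs.1]

-- Multiplying by the integrating factor `exp (m t)` turns the equation into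
-- `(exp (m t) ∫₀ᵗ g)' = exp (m t) x t`.
lemma mul_integral_eq_expFilter {g : ℝ → ℝ} (hg : ContinuousOn g (Set.Ici 0))
    (hx : ContinuousOn x (Set.Ici 0))
    (heq : ∀ t, 0 ≤ t → g t = x t - m * ∫ s in (0 : ℝ)..t, g s) {t : ℝ} (ht : 0 ≤ t) :
    m * ∫ s in (0 : ℝ)..t, g s = expFilter m x t := by
  have hderiv : ∀ s ∈ Set.Ioo 0 t, HasDerivAt
      (fun s => Real.exp (m * s) * ∫ v in (0 : ℝ)..s, g v) (Real.exp (m * s) * x s) s := by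
    intro s hs
    have hprim : HasDerivAt (fun s => ∫ v in (0 : ℝ)..s, g v) (g s) s :=
      intervalIntegral.integral_hasDerivAt_right
        (intervalIntegrable_of_continuousOn_Ici hg hs.1.le)
        ((hg.mono Set.Ioi_subset_Ici_self).stronglyMeasurableAtFilter isOpen_Ioi s hs.1)
        (hg.continuousAt (Ici_mem_nhds hs.1))
    refine ((hasDerivAt_exp_const_mul m s).mul hprim).congr_deriv ?_
    linear_combination Real.exp (m * s) * heq s hs.1.le
  have hftc : ∫ s in (0 : ℝ)..t, Real.exp (m * s) * x s =
      Real.exp (m * t) * ∫ s in (0 : ℝ)..t, g s := by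
    simpa using intervalIntegral.integral_eq_sub_of_hasDerivAt_of_le ht
      (((by fun_prop : Continuous fun s => Real.exp (m * s)).continuousOn.mul
        (continuousOn_primitive_Ici hg)).mono Set.Icc_subset_Ici_self) hderiv
      (intervalIntegrable_of_continuousOn_Ici (by fun_prop) ht)
  simp only [expFilter, mul_assoc, intervalIntegral.integral_const_mul, hftc]
  linear_combination -(m * ∫ s in (0 : ℝ)..t, g s) * exp_neg_mul_exp (m * t)

lemma IsCumulative.expFilter_le (hm : 0 ≤ m) (hx : IsCumulative x) {t : ℝ} (ht : 0 ≤ t) :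
    expFilter m x t ≤ x t := by
  have hxc := hx.continuous
  have hint : ∫ s in (0 : ℝ)..t, m * Real.exp (m * s) = Real.exp (m * t) - 1 := by
    rw [intervalIntegral.integral_eq_sub_of_hasDerivAt
      (fun s _ => hasDerivAt_exp_const_mul m s) (Continuous.intervalIntegrable (by fun_prop) _ _)]
    simp
  calc expFilter m x t
      ≤ Real.exp (-(m * t)) * ∫ s in (0 : ℝ)..t, m * Real.exp (m * s) * x t := by
        refine mul_le_mul_of_nonneg_left ?_ (Real.exp_pos _).le
        refine intervalIntegral.integral_mono_on ht
          (Continuous.intervalIntegrable (by fun_prop) _ _)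
          (Continuous.intervalIntegrable (by fun_prop) _ _) fun s hs => ?_
        exact mul_le_mul_of_nonneg_left (hx.monotoneOn hs.1 ht hs.2) (by positivity)
    _ = (1 - Real.exp (-(m * t))) * x t := by
        rw [intervalIntegral.integral_mul_const, hint]
        linear_combination x t * exp_neg_mul_exp (m * t)
    _ ≤ x t := mul_le_of_le_one_left (hx.nonneg ht) (sub_le_self _ (Real.exp_pos _).le)

lemma IsCumulative.expFilter (hm : 0 ≤ m) (hx : IsCumulative x) :
    IsCumulative (expFilter m x) where
  continuous := continuous_expFilter m hx.continuous
  zero_nonneg := (expFilter_zero m x).ge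
  monotoneOn := by
    have hderiv := hasDerivAt_expFilter m hx.continuous
    refine monotoneOn_of_deriv_nonneg (convex_Ici 0)
      (continuous_expFilter m hx.continuous).continuousOn
      (fun t _ => (hderiv t).differentiableAt.differentiableWithinAt) fun t ht => ?_
    rw [(hderiv t).deriv]
    rw [interior_Ici] at ht
    exact mul_nonneg hm (sub_nonneg.2 (hx.expFilter_le hm (le_of_lt ht)))

lemma abs_expFilter_sub_le (hm : 0 ≤ m) (hx : Continuous x) (hy : Continuous y) {b K t : ℝ}
    (hb : 0 < b) (hK : 0 ≤ K) (ht : 0 ≤ t)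
    (hxy : ∀ s ∈ Set.Icc 0 t, |x s - y s| ≤ K * Real.exp (b * s)) :
    |expFilter m x t - expFilter m y t| ≤ m / b * K * Real.exp (b * t) := by
  have hpoint : ∀ s ∈ Set.Ioc 0 t, ‖m * Real.exp (m * s) * x s - m * Real.exp (m * s) * y s‖ ≤
      m * Real.exp (m * t) * (K * Real.exp (b * s)) := fun s hs => by
    rw [← mul_sub, norm_mul, Real.norm_eq_abs, Real.norm_eq_abs, abs_of_nonneg (by positivity)]
    gcongr
    exacts [hs.2, hxy s ⟨hs.1.le, hs.2⟩]
  have hnorm := intervalIntegral.norm_integral_le_of_norm_le (μ := volume) ht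
    (Eventually.of_forall hpoint) (Continuous.intervalIntegrable (by fun_prop) _ _)
  have hint : ∫ s in (0 : ℝ)..t, Real.exp (b * s) = (Real.exp (b * t) - 1) / b := by
    simp [hb.ne', div_eq_inv_mul]
  rw [intervalIntegral.integral_const_mul, intervalIntegral.integral_const_mul, hint] at hnorm
  calc |expFilter m x t - expFilter m y t|
      = Real.exp (-(m * t)) * ‖∫ s in (0 : ℝ)..t,
          (m * Real.exp (m * s) * x s - m * Real.exp (m * s) * y s)‖ := by
        rw [intervalIntegral.integral_sub (Continuous.intervalIntegrable (by fun_prop) _ _)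
          (Continuous.intervalIntegrable (by fun_prop) _ _), Real.norm_eq_abs, expFilter,
          expFilter, ← mul_sub, abs_mul, abs_of_pos (Real.exp_pos _)]
    _ ≤ Real.exp (-(m * t)) *
          (m * Real.exp (m * t) * (K * ((Real.exp (b * t) - 1) / b))) := by gcongr
    _ = m / b * K * (Real.exp (b * t) - 1) := by
        linear_combination m * (K * ((Real.exp (b * t) - 1) / b)) * exp_neg_mul_exp (m * t)
    _ ≤ m / b * K * Real.exp (b * t) :=
        mul_le_mul_of_nonneg_left (sub_le_self _ zero_le_one) (by positivity)

end ExpFilter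

/-! ### The one-dimensional Skorokhod problem -/

/-- `y` is constant on every interval of `[0, ∞)` along which `w` is positive: a measure-free form
of the complementarity condition `∫ w dy = 0`. -/
def FlatWherePos (w y : ℝ → ℝ) : Prop :=
  ∀ ⦃a b : ℝ⦄, 0 ≤ a → a ≤ b → (∀ s ∈ Set.Ioc a b, 0 < w s) → y b = y a

/-- Regulator of the one-dimensional Skorokhod problem driven by `z`: the least nondecreasing
`y ≥ 0` with `z + y ≥ 0` on `[0, ∞)`. Only meaningful for `0 ≤ t`. -/
noncomputable def skorokhodReg (z : ℝ → ℝ) (t : ℝ) : ℝ :=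
  sSup ((fun s => max (-z s) 0) '' Set.Icc 0 t)

section Skorokhod

variable {z z' w y : ℝ → ℝ} {s t : ℝ}

lemma isGreatest_skorokhodReg (hz : ContinuousOn z (Set.Ici 0)) (ht : 0 ≤ t) :
    IsGreatest ((fun s => max (-z s) 0) '' Set.Icc 0 t) (skorokhodReg z t) := by
  have hcont : ContinuousOn (fun s => max (-z s) 0) (Set.Icc 0 t) :=
    (hz.neg.sup continuousOn_const).mono Set.Icc_subset_Ici_self
  exact (isCompact_Icc.image_of_continuousOn hcont).isGreatest_sSup
    ((Set.nonempty_Icc.2 ht).image _)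

lemma max_neg_le_skorokhodReg (hz : ContinuousOn z (Set.Ici 0)) (hs : 0 ≤ s) (hst : s ≤ t) :
    max (-z s) 0 ≤ skorokhodReg z t :=
  (isGreatest_skorokhodReg hz (hs.trans hst)).2 ⟨s, ⟨hs, hst⟩, rfl⟩

lemma exists_skorokhodReg_eq (hz : ContinuousOn z (Set.Ici 0)) (ht : 0 ≤ t) :
    ∃ s ∈ Set.Icc 0 t, skorokhodReg z t = max (-z s) 0 := by
  obtain ⟨s, hs, h⟩ := (isGreatest_skorokhodReg hz ht).1
  exact ⟨s, hs, h.symm⟩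

lemma skorokhodReg_nonneg (hz : ContinuousOn z (Set.Ici 0)) (ht : 0 ≤ t) :
    0 ≤ skorokhodReg z t :=
  (le_max_right _ _).trans (max_neg_le_skorokhodReg hz ht le_rfl)

lemma add_skorokhodReg_nonneg (hz : ContinuousOn z (Set.Ici 0)) (ht : 0 ≤ t) :
    0 ≤ z t + skorokhodReg z t := by
  linarith [(le_max_left _ _).trans (max_neg_le_skorokhodReg hz ht le_rfl)]

lemma skorokhodReg_zero (h0 : 0 ≤ z 0) : skorokhodReg z 0 = 0 := by
  simp [skorokhodReg, h0]

lemma monotoneOn_skorokhodReg (hz : ContinuousOn z (Set.Ici 0)) :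
    MonotoneOn (skorokhodReg z) (Set.Ici 0) := fun s hs t _ hst => by
  obtain ⟨a, ha, h⟩ := exists_skorokhodReg_eq hz hs
  exact h ▸ max_neg_le_skorokhodReg hz ha.1 (ha.2.trans hst)

lemma skorokhodReg_le_add_of_le_add (hz : ContinuousOn z (Set.Ici 0)) (hs : 0 ≤ s) (hst : s ≤ t)
    {c : ℝ} (hc : 0 ≤ c) (hdrop : ∀ a ∈ Set.Icc s t, z s ≤ z a + c) :
    skorokhodReg z t ≤ skorokhodReg z s + c := by
  obtain ⟨a, ha, h⟩ := exists_skorokhodReg_eq hz (hs.trans hst)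
  rw [h]
  rcases le_total a s with has | hsa
  · linarith [max_neg_le_skorokhodReg hz ha.1 has]
  · have hneg := (le_max_left _ _).trans (max_neg_le_skorokhodReg hz hs le_rfl)
    exact max_le (by linarith [hdrop a ⟨hsa, ha.2⟩])
      (add_nonneg (skorokhodReg_nonneg hz hs) hc)

lemma skorokhodReg_le_add (hz : ContinuousOn z (Set.Ici 0)) (hz' : ContinuousOn z' (Set.Ici 0))
    (ht : 0 ≤ t) {K : ℝ} (hK : 0 ≤ K) (h : ∀ s ∈ Set.Icc 0 t, z' s ≤ z s + K) :
    skorokhodReg z t ≤ skorokhodReg z' t + K := by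
  obtain ⟨a, ha, heq⟩ := exists_skorokhodReg_eq hz ht
  have hneg := (le_max_left _ _).trans (max_neg_le_skorokhodReg hz' ha.1 ha.2)
  rw [heq]
  exact max_le (by linarith [h a ha]) (add_nonneg (skorokhodReg_nonneg hz' ht) hK)

lemma abs_skorokhodReg_sub_le (hz : ContinuousOn z (Set.Ici 0))
    (hz' : ContinuousOn z' (Set.Ici 0)) (ht : 0 ≤ t) {K : ℝ}
    (h : ∀ s ∈ Set.Icc 0 t, |z s - z' s| ≤ K) :
    |skorokhodReg z t - skorokhodReg z' t| ≤ K := by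
  have hK : 0 ≤ K := (abs_nonneg _).trans (h t ⟨ht, le_rfl⟩)
  rw [abs_sub_le_iff]
  constructor
  · linarith [skorokhodReg_le_add hz hz' ht hK fun s hs => by
      linarith [(abs_sub_le_iff.1 (h s hs)).2]]
  · linarith [skorokhodReg_le_add hz' hz ht hK fun s hs => by
      linarith [(abs_sub_le_iff.1 (h s hs)).1]]

lemma flatWherePos_skorokhodReg (hz : ContinuousOn z (Set.Ici 0)) :
    FlatWherePos (fun s => z s + skorokhodReg z s) (skorokhodReg z) := by
  intro a b ha hab hpos
  have hb := ha.trans hab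
  refine le_antisymm ?_ (monotoneOn_skorokhodReg hz ha hb hab)
  obtain ⟨c, hc, h⟩ := exists_skorokhodReg_eq hz hb
  rcases le_or_gt c a with hca | hac
  · exact h ▸ max_neg_le_skorokhodReg hz hc.1 hca
  · have hwc : 0 < z c + skorokhodReg z c := hpos c ⟨hac, hc.2⟩
    have hmono := monotoneOn_skorokhodReg hz hc.1 hb hc.2
    rcases max_choice (-z c) 0 with hmax | hmax <;> rw [hmax] at h
    · linarith
    · exact h ▸ skorokhodReg_nonneg hz ha

-- Since the last time `a ≤ t` at which `z + y` vanishes, `y` has stayed equal to `-z a`.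
lemma eq_skorokhodReg (hz : ContinuousOn z (Set.Ici 0)) (hy : ContinuousOn y (Set.Ici 0))
    (hmono : MonotoneOn y (Set.Ici 0)) (hy0 : y 0 = 0) (hnonneg : ∀ t, 0 ≤ t → 0 ≤ z t + y t)
    (hflat : FlatWherePos (fun s => z s + y s) y) (ht : 0 ≤ t) :
    y t = skorokhodReg z t := by
  apply le_antisymm
  · have hcompact : IsCompact {s ∈ Set.Icc 0 t | z s + y s ≤ 0} :=
      isCompact_Icc.of_isClosed_subset (isClosed_Icc.isClosed_le
        ((hz.add hy).mono Set.Icc_subset_Ici_self) continuousOn_const) fun s hs => hs.1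
    rcases Set.eq_empty_or_nonempty {s ∈ Set.Icc 0 t | z s + y s ≤ 0} with hempty | hne
    · have hyt : y t = y 0 := hflat le_rfl ht fun s hs => not_le.1 fun hle =>
        Set.eq_empty_iff_forall_notMem.1 hempty s ⟨⟨hs.1.le, hs.2⟩, hle⟩
      exact (hyt.trans hy0).trans_le (skorokhodReg_nonneg hz ht)
    · obtain ⟨a, ⟨ha, hwa⟩, hlast⟩ := hcompact.exists_isGreatest hne
      have hyt : y t = y a := hflat ha.1 ha.2 fun s hs => not_le.1 fun hle =>
        hs.1.not_ge (hlast ⟨⟨ha.1.trans hs.1.le, hs.2⟩, hle⟩)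
      linarith [(le_max_left _ _).trans (max_neg_le_skorokhodReg hz ha.1 ha.2)]
  · obtain ⟨a, ha, h⟩ := exists_skorokhodReg_eq hz ht
    have hya : 0 ≤ y a := hy0 ▸ hmono Set.self_mem_Ici ha.1 ha.1
    rw [h]
    exact (max_le (by linarith [hnonneg a ha.1]) hya).trans (hmono ha.1 ht ha.2)

end Skorokhod

/-! ### The complementarity integral -/

lemma lsMeasure_Ioc {u : ℝ → ℝ} (hm : Monotone u) (hc : Continuous u) (a b : ℝ) :
    lsMeasure u (Set.Ioc a b) = ENNReal.ofReal (u b - u a) := by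
  have heq : ∀ c, hm.stieltjesFunction c = u c := fun c => by
    rw [Monotone.stieltjesFunction_eq, hc.continuousWithinAt.rightLim_eq]
  rw [lsMeasure, dif_pos hm, StieltjesFunction.measure_Ioc, heq, heq]

lemma setLIntegral_ofReal_eq_zero_iff {α : Type*} [MeasurableSpace α] {μ : Measure α} {s : Set α}
    (hs : MeasurableSet s) {w : α → ℝ} (hw : AEMeasurable w (μ.restrict s)) :
    ∫⁻ x in s, ENNReal.ofReal (w x) ∂μ = 0 ↔ μ {x | x ∈ s ∧ 0 < w x} = 0 := by
  rw [lintegral_eq_zero_iff' hw.ennreal_ofReal, Filter.EventuallyEq, ae_restrict_iff' hs, ae_iff]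
  simp

lemma apply_max_zero {u : ℝ → ℝ} (hu : ∀ t ≤ 0, u t = 0) (t : ℝ) : u (max t 0) = u t := by
  rcases le_total t 0 with ht | ht
  · rw [max_eq_right ht, hu 0 le_rfl, hu t ht]
  · rw [max_eq_left ht]

lemma lintegral_lsMeasure_eq_zero_iff_flatWherePos {u w : ℝ → ℝ} (hm : Monotone u)
    (hc : Continuous u) (hu0 : ∀ t ≤ 0, u t = 0) (hw : ContinuousOn w (Set.Ici 0)) :
    ∫⁻ s in Set.Ici (0 : ℝ), ENNReal.ofReal (w s) ∂(lsMeasure u) = 0 ↔ FlatWherePos w u := by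
  rw [setLIntegral_ofReal_eq_zero_iff measurableSet_Ici (hw.aemeasurable measurableSet_Ici)]
  constructor
  · intro hzero a b ha hab hpos
    have hsub : Set.Ioc a b ⊆ {s | s ∈ Set.Ici 0 ∧ 0 < w s} :=
      fun s hs => ⟨ha.trans hs.1.le, hpos s hs⟩
    have hIoc := measure_mono_null hsub hzero
    rw [lsMeasure_Ioc hm hc, ENNReal.ofReal_eq_zero, sub_nonpos] at hIoc
    exact hIoc.antisymm (hm hab)
  · intro hflat
    refine measure_null_of_locally_null _ fun t ⟨ht0, htw⟩ => ?_
    obtain ⟨ε, hε, hball⟩ := Metric.mem_nhdsWithin_iff.1 ((hw t ht0).eventually (lt_mem_nhds htw))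
    have hconst : u (t + ε / 2) = u (t - ε / 2) := by
      rw [← apply_max_zero hu0 (t - ε / 2)]
      refine hflat (le_max_right _ _) (max_le (by linarith) (by linarith [Set.mem_Ici.1 ht0]))
        fun s hs => hball ⟨?_, ?_⟩
      · obtain ⟨hs1, -⟩ := max_lt_iff.1 hs.1
        rw [Metric.mem_ball, Real.dist_eq, abs_lt]
        constructor <;> linarith [hs.2]
      · exact (max_lt_iff.1 hs.1).2.le
    refine ⟨Set.Ioc (t - ε / 2) (t + ε / 2),
      mem_nhdsWithin_of_mem_nhds (Ioc_mem_nhds (by linarith) (by linarith)), ?_⟩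
    rw [lsMeasure_Ioc hm hc, hconst, sub_self, ENNReal.ofReal_zero]

/-! ### A single-server fluid queue -/

/-- Cumulative output of a fluid server of rate at most `l` that is idle before time `0`. -/
structure IsThroughput (l : ℝ) (d : ℝ → ℝ) : Prop where
  eq_zero : ∀ t ≤ 0, d t = 0
  monotone : Monotone d
  le_add : ∀ s t, s ≤ t → d t ≤ d s + l * (t - s)

/-- Cumulative idle time of a server of rate `l` with cumulative output `d`. -/
noncomputable def idleTime (l : ℝ) (d : ℝ → ℝ) (t : ℝ) : ℝ := max t 0 - d t / l

/-- Cumulative output of a fluid queue with cumulative input `x` (including the initial content)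
served at rate `l` whenever it is nonempty. -/
noncomputable def queueOutput (l : ℝ) (x : ℝ → ℝ) (t : ℝ) : ℝ :=
  l * max t 0 - skorokhodReg (fun s => x s - l * s) (max t 0)

section Queue

variable {l : ℝ} {d u x y : ℝ → ℝ}

lemma IsThroughput.continuous (hd : IsThroughput l d) : Continuous d := by
  refine (LipschitzWith.of_le_add_mul l.toNNReal fun s t => ?_).continuous
  rcases le_total s t with hst | hts
  · exact (hd.monotone hst).trans (le_add_of_nonneg_right (by positivity))
  · refine (hd.le_add t s hts).trans ?_
    rw [Real.dist_eq, abs_of_nonneg (sub_nonneg.2 hts), Real.coe_toNNReal']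
    gcongr
    exact le_max_left l 0

lemma IsThroughput.nonneg (hd : IsThroughput l d) (t : ℝ) : 0 ≤ d t :=
  (hd.eq_zero _ (min_le_right t 0)).ge.trans (hd.monotone (min_le_left t 0))

lemma IsThroughput.le_mul_max (hd : IsThroughput l d) (t : ℝ) : d t ≤ l * max t 0 := by
  have h := hd.le_add 0 _ (le_max_right t 0)
  rw [hd.eq_zero 0 le_rfl, sub_zero, zero_add] at h
  exact (hd.monotone (le_max_left t 0)).trans h

lemma IsThroughput.abs_sub_le {d' : ℝ → ℝ} (hd : IsThroughput l d) (hd' : IsThroughput l d')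
    (t : ℝ) : |d t - d' t| ≤ l * max t 0 := by
  rw [abs_sub_le_iff]
  constructor <;> linarith [hd.le_mul_max t, hd'.le_mul_max t, hd.nonneg t, hd'.nonneg t]

lemma IsThroughput.isCumulative (hd : IsThroughput l d) : IsCumulative d :=
  ⟨hd.continuous, hd.monotone.monotoneOn _, hd.nonneg 0⟩

lemma isThroughput_zero (hl : 0 ≤ l) : IsThroughput l fun _ => 0 where
  eq_zero _ _ := rfl
  monotone := monotone_const
  le_add s t hst := by simpa using mul_nonneg hl (sub_nonneg.2 hst)

lemma isClosed_setOf_isThroughput (l : ℝ) : IsClosed {d | IsThroughput l d} := by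
  have hset : {d | IsThroughput l d} = {d | ∀ t ≤ 0, d t = 0} ∩
      {d | ∀ s t, s ≤ t → d s ≤ d t ∧ d t ≤ d s + l * (t - s)} := by
    ext d
    exact ⟨fun h => ⟨h.eq_zero, fun s t hst => ⟨h.monotone hst, h.le_add s t hst⟩⟩,
      fun h => ⟨h.1, fun s t hst => (h.2 s t hst).1, fun s t hst => (h.2 s t hst).2⟩⟩
  rw [hset]
  simp only [Set.ofPred_forall, Set.ofPred_and]
  refine (isClosed_iInter fun t => isClosed_iInter fun _ => ?_).inter
    (isClosed_iInter fun s => isClosed_iInter fun t => isClosed_iInter fun _ => .inter ?_ ?_)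
  · exact isClosed_eq (continuous_apply t) continuous_const
  · exact isClosed_le (continuous_apply s) (continuous_apply t)
  · exact isClosed_le (continuous_apply t) ((continuous_apply s).add continuous_const)

lemma IsThroughput.idleTime_eq_zero (hd : IsThroughput l d) {t : ℝ} (ht : t ≤ 0) :
    idleTime l d t = 0 := by
  simp [idleTime, hd.eq_zero t ht, ht]

lemma IsThroughput.continuous_idleTime (hd : IsThroughput l d) : Continuous (idleTime l d) :=
  (by fun_prop : Continuous fun t : ℝ => max t 0).sub (hd.continuous.div_const l)

lemma IsThroughput.monotone_idleTime (hl : 0 < l) (hd : IsThroughput l d) :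
    Monotone (idleTime l d) := fun s t hst => by
  have h := hd.le_add _ _ (max_le_max_right 0 hst)
  rw [apply_max_zero hd.eq_zero, apply_max_zero hd.eq_zero, ← sub_le_iff_le_add',
    ← div_le_iff₀' hl, sub_div] at h
  simp only [idleTime]
  linarith

lemma IsThroughput.idleTime_nonneg (hl : 0 < l) (hd : IsThroughput l d) (t : ℝ) :
    0 ≤ idleTime l d t :=
  (hd.idleTime_eq_zero (min_le_right t 0)).ge.trans (hd.monotone_idleTime hl (min_le_left t 0))

lemma mul_sub_idleTime (hl : l ≠ 0) {t : ℝ} (ht : 0 ≤ t) : l * (t - idleTime l d t) = d t := by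
  rw [idleTime, max_eq_left ht]
  field_simp
  ring

lemma continuousOn_sub_const_mul (hx : ContinuousOn x (Set.Ici 0)) :
    ContinuousOn (fun s => x s - l * s) (Set.Ici 0) :=
  hx.sub (by fun_prop)

lemma queueOutput_of_nonneg {t : ℝ} (ht : 0 ≤ t) :
    queueOutput l x t = l * t - skorokhodReg (fun s => x s - l * s) t := by
  rw [queueOutput, max_eq_left ht]

lemma IsCumulative.isThroughput_queueOutput (hl : 0 ≤ l) (hx : IsCumulative x) :
    IsThroughput l (queueOutput l x) := by
  have hz := continuousOn_sub_const_mul (l := l) hx.continuous.continuousOn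
  refine ⟨fun t ht => ?_, fun s t hst => ?_, fun s t hst => ?_⟩
  · rw [queueOutput, max_eq_right ht, skorokhodReg_zero (by simpa using hx.zero_nonneg)]
    simp
  · have hst' := max_le_max_right 0 hst
    have hdrop : ∀ a ∈ Set.Icc (max s 0) (max t 0),
        x (max s 0) - l * max s 0 ≤ x a - l * a + l * (max t 0 - max s 0) := fun a ha => by
      have hs := le_max_right s 0
      nlinarith [hx.monotoneOn hs (hs.trans ha.1) ha.1, mul_le_mul_of_nonneg_left ha.2 hl]
    have hreg := skorokhodReg_le_add_of_le_add hz (le_max_right s 0) hst'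
      (mul_nonneg hl (sub_nonneg.2 hst')) hdrop
    simp only [queueOutput]
    linarith
  · have hreg := monotoneOn_skorokhodReg hz (le_max_right s 0) (le_max_right t 0)
      (max_le_max_right 0 hst)
    have hmax : max t 0 ≤ max s 0 + (t - s) :=
      max_le (by linarith [le_max_left s 0]) (add_nonneg (le_max_right s 0) (sub_nonneg.2 hst))
    simp only [queueOutput]
    linarith [mul_le_mul_of_nonneg_left hmax hl]

lemma queueOutput_le (hx : ContinuousOn x (Set.Ici 0)) {t : ℝ} (ht : 0 ≤ t) :
    queueOutput l x t ≤ x t := by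
  rw [queueOutput_of_nonneg ht]
  linarith [add_skorokhodReg_nonneg (continuousOn_sub_const_mul (l := l) hx) ht]

lemma abs_queueOutput_sub_le (hx : ContinuousOn x (Set.Ici 0)) (hy : ContinuousOn y (Set.Ici 0))
    {K t : ℝ} (h : ∀ s ∈ Set.Icc 0 (max t 0), |x s - y s| ≤ K) :
    |queueOutput l x t - queueOutput l y t| ≤ K := by
  rw [queueOutput, queueOutput, sub_sub_sub_cancel_left, abs_sub_comm]
  exact abs_skorokhodReg_sub_le (continuousOn_sub_const_mul hx) (continuousOn_sub_const_mul hy)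
    (le_max_right t 0) fun s hs => by simpa using h s hs

lemma flatWherePos_idleTime_queueOutput (hl : l ≠ 0) (hx : ContinuousOn x (Set.Ici 0)) :
    FlatWherePos (fun s => x s - queueOutput l x s) (idleTime l (queueOutput l x)) := by
  intro a b ha hab hpos
  have hreg : ∀ t, 0 ≤ t →
      idleTime l (queueOutput l x) t = skorokhodReg (fun s => x s - l * s) t / l := fun t ht => by
    rw [idleTime, queueOutput_of_nonneg ht, max_eq_left ht]
    field_simp
    ring
  rw [hreg a ha, hreg b (ha.trans hab)]
  congr 1
  refine flatWherePos_skorokhodReg (continuousOn_sub_const_mul hx) ha hab fun s hs => ?_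
  have hs' : 0 < x s - queueOutput l x s := hpos s hs
  rw [queueOutput_of_nonneg (ha.trans hs.1.le)] at hs'
  beta_reduce
  linarith

lemma eq_queueOutput_of_flatWherePos (hl : 0 ≤ l) (hx : ContinuousOn x (Set.Ici 0))
    (hu : ContinuousOn u (Set.Ici 0)) (hmono : MonotoneOn u (Set.Ici 0)) (hu0 : u 0 = 0)
    (hnonneg : ∀ t, 0 ≤ t → 0 ≤ x t - l * (t - u t))
    (hflat : FlatWherePos (fun t => x t - l * (t - u t)) u) {t : ℝ} (ht : 0 ≤ t) :
    l * (t - u t) = queueOutput l x t := by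
  have hsplit : ∀ s, x s - l * (s - u s) = x s - l * s + l * u s := fun s => by ring
  simp only [hsplit] at hnonneg hflat
  have hreg : l * u t = skorokhodReg (fun s => x s - l * s) t :=
    eq_skorokhodReg (y := fun s => l * u s) (continuousOn_sub_const_mul hx) (hu.const_smul l)
      (fun _ ha _ hb hab => mul_le_mul_of_nonneg_left (hmono ha hb hab) hl) (by simp [hu0])
      hnonneg (fun a b ha hab hpos => congrArg (l * ·) (hflat ha hab hpos)) ht
  rw [queueOutput_of_nonneg ht, ← hreg, mul_sub]

end Queue

/-! ### The network as a fixed-point problem for the departures -/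

/-- Families of cumulative server outputs, one server of rate `l i` for each `i`. -/
def throughputPaths {ι : Type*} (l : ι → ℝ) : Set (ℝ → ι → ℝ) :=
  {D | ∀ i, IsThroughput (l i) fun t => D t i}

lemma isClosed_throughputPaths {ι : Type*} (l : ι → ℝ) : IsClosed (throughputPaths l) := by
  rw [throughputPaths, Set.ofPred_forall]
  exact isClosed_iInter fun i => (isClosed_setOf_isThroughput (l i)).preimage
    (continuous_pi fun t => (continuous_apply i).comp (continuous_apply t))

section Network

variable {r : ℕ}

lemma IsRouting.le_one {q : Mat r} (hq : IsRouting q) (i j : Fin r) : q i j ≤ 1 :=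
  (Finset.single_le_sum (fun k _ => hq.1 i k) (Finset.mem_univ j)).trans_eq (hq.2 i)

lemma NetParams.isRouting_P (np : NetParams r) : IsRouting np.P := ⟨np.P_nonneg, np.P_rowsum⟩

lemma MemT.of_nonneg {e f : Mat r} (he : ∀ i j, 0 ≤ e i j) (hf : ∀ i j, 0 ≤ f i j)
    (hsum : ∑ i, ∑ j, (e i j + f i j) = 1) : MemT e f := by
  have hle (i j : Fin r) : e i j + f i j ≤ 1 := by
    have hterm (i j : Fin r) : 0 ≤ e i j + f i j := add_nonneg (he i j) (hf i j)
    calc e i j + f i j ≤ ∑ j, (e i j + f i j) :=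
          Finset.single_le_sum (fun j _ => hterm i j) (Finset.mem_univ j)
      _ ≤ ∑ i, ∑ j, (e i j + f i j) :=
          Finset.single_le_sum (f := fun i => ∑ j, (e i j + f i j))
            (fun i _ => Finset.sum_nonneg fun j _ => hterm i j) (Finset.mem_univ i)
      _ = 1 := hsum
  exact ⟨fun i j => ⟨he i j, by linarith [hle i j, hf i j]⟩,
    fun i j => ⟨hf i j, by linarith [hle i j, he i j]⟩, hsum⟩

section Definitions

variable (np : NetParams r) (Q e0 f0 : Mat r) (D : ℝ → Fin r → ℝ)

/-- Cumulative number of full cars from `i` that have reached `j`, when `D t i` full cars have left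
`i` by time `t`. -/
noncomputable def fullArrivals (i j : Fin r) : ℝ → ℝ :=
  expFilter (np.mu i j) fun t => f0 i j + np.P i j * D t i

/-- Cumulative number of empty cars sent from `i` to `j`, including those initially on their way;
for `i = j`, cars that stay at `i` after dropping off their customer. -/
noncomputable def emptyInput (i j : Fin r) (t : ℝ) : ℝ :=
  e0 i j + Q i j * ∑ k, fullArrivals np f0 D k i t

/-- Cumulative number of empty cars from `i` that have reached `j`, for `i ≠ j`. -/
noncomputable def emptyArrivals (i j : Fin r) : ℝ → ℝ :=
  expFilter (np.mu i j) (emptyInput np Q e0 f0 D i j)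

/-- Cumulative number of cars that have become available at `i`. -/
noncomputable def stationInput (i : Fin r) (t : ℝ) : ℝ :=
  emptyInput np Q e0 f0 D i i t +
    ∑ j ∈ Finset.univ.filter (fun j => j ≠ i), emptyArrivals np Q e0 f0 D j i t

/-- Departures of full cars that result when the arrivals are those generated by the departures
`D`; fluid model solutions correspond to fixed points of this map. -/
noncomputable def departureMap (t : ℝ) (i : Fin r) : ℝ :=
  queueOutput (np.lam i) (stationInput np Q e0 f0 D i) t

/-- The path `f` of full cars generated by the departures `D`. -/
noncomputable def fullCars (t : ℝ) (i j : Fin r) : ℝ :=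
  f0 i j + np.P i j * D t i - fullArrivals np f0 D i j t

/-- The path `e` of empty cars generated by the departures `D`: waiting at `i` if `i = j`,
driving otherwise. -/
noncomputable def emptyCars (t : ℝ) (i j : Fin r) : ℝ :=
  if i = j then stationInput np Q e0 f0 D i t - D t i
  else emptyInput np Q e0 f0 D i j t - emptyArrivals np Q e0 f0 D i j t

end Definitions

section Regularity

variable {np : NetParams r} {Q e0 f0 : Mat r} {D : ℝ → Fin r → ℝ}

lemma continuous_fullArrivals (hD : ∀ i, Continuous fun t => D t i) (i j : Fin r) :
    Continuous (fullArrivals np f0 D i j) :=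
  continuous_expFilter _ (continuous_const.add (continuous_const.mul (hD i)))

lemma continuous_emptyInput (hD : ∀ i, Continuous fun t => D t i) (i j : Fin r) :
    Continuous (emptyInput np Q e0 f0 D i j) :=
  continuous_const.add <| continuous_const.mul <| continuous_finsetSum _ fun k _ =>
    continuous_fullArrivals hD k i

lemma continuous_emptyArrivals (hD : ∀ i, Continuous fun t => D t i) (i j : Fin r) :
    Continuous (emptyArrivals np Q e0 f0 D i j) :=
  continuous_expFilter _ (continuous_emptyInput hD i j)

lemma continuous_stationInput (hD : ∀ i, Continuous fun t => D t i) (i : Fin r) :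
    Continuous (stationInput np Q e0 f0 D i) :=
  (continuous_emptyInput hD i i).add <| continuous_finsetSum _ fun j _ =>
    continuous_emptyArrivals hD j i

lemma isCumulative_fullInput (h0 : MemT e0 f0) (hD : D ∈ throughputPaths np.lam) (i j : Fin r) :
    IsCumulative fun t => f0 i j + np.P i j * D t i :=
  (IsCumulative.const (h0.2.1 i j).1).add ((hD i).isCumulative.const_mul (np.P_nonneg i j))

lemma isCumulative_fullArrivals (h0 : MemT e0 f0) (hD : D ∈ throughputPaths np.lam)
    (i j : Fin r) : IsCumulative (fullArrivals np f0 D i j) :=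
  (isCumulative_fullInput h0 hD i j).expFilter (np.mu_pos i j).le

lemma isCumulative_emptyInput (hQ : IsRouting Q) (h0 : MemT e0 f0)
    (hF : ∀ i j, IsCumulative (fullArrivals np f0 D i j)) (i j : Fin r) :
    IsCumulative (emptyInput np Q e0 f0 D i j) :=
  (IsCumulative.const (h0.1 i j).1).add
    ((IsCumulative.sum fun k _ => hF k i).const_mul (hQ.1 i j))

lemma isCumulative_stationInput (hQ : IsRouting Q) (h0 : MemT e0 f0)
    (hF : ∀ i j, IsCumulative (fullArrivals np f0 D i j)) (i : Fin r) :
    IsCumulative (stationInput np Q e0 f0 D i) :=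
  (isCumulative_emptyInput hQ h0 hF i i).add <| IsCumulative.sum fun j _ =>
    (isCumulative_emptyInput hQ h0 hF j i).expFilter (np.mu_pos j i).le

lemma departureMap_mem_throughputPaths (hQ : IsRouting Q) (h0 : MemT e0 f0)
    (hF : ∀ i j, IsCumulative (fullArrivals np f0 D i j)) :
    departureMap np Q e0 f0 D ∈ throughputPaths np.lam := fun i =>
  (isCumulative_stationInput hQ h0 hF i).isThroughput_queueOutput (np.lam_pos i).le

end Regularity

/-! ### The contraction estimate -/

/-- The sum of all travel rates, controlling the Lipschitz constants of the arrival processes. -/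
noncomputable def NetParams.totalRate (np : NetParams r) : ℝ := ∑ i, ∑ j, np.mu i j

lemma NetParams.sum_mu_le_totalRate (np : NetParams r) (j : Fin r) :
    ∑ i, np.mu i j ≤ np.totalRate :=
  Finset.sum_le_sum fun i _ =>
    Finset.single_le_sum (fun k _ => (np.mu_pos i k).le) (Finset.mem_univ j)

lemma NetParams.sum_mu_div_mul_le (np : NetParams r) {b K x : ℝ} (hb : 0 ≤ b) (hK : 0 ≤ K)
    (hx : 0 ≤ x) (j : Fin r) : ∑ i, np.mu i j / b * K * x ≤ np.totalRate / b * K * x := by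
  rw [← Finset.sum_mul, ← Finset.sum_mul, ← Finset.sum_div]
  gcongr
  exact np.sum_mu_le_totalRate j

lemma NetParams.totalRate_nonneg (np : NetParams r) : 0 ≤ np.totalRate :=
  Finset.sum_nonneg fun i _ => Finset.sum_nonneg fun j _ => (np.mu_pos i j).le

/-- Exponential weight on `[0, ∞)` for which the departure map contracts by the factor `1 / 2`. -/
noncomputable def NetParams.contractionWeight (np : NetParams r) (t : ℝ) : ℝ :=
  Real.exp ((4 * np.totalRate + 1) * max t 0)

section Contraction

variable {np : NetParams r} {Q e0 f0 : Mat r} {D E : ℝ → Fin r → ℝ} {b K t : ℝ}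

lemma abs_fullArrivals_sub_le (hD : ∀ i, Continuous fun t => D t i)
    (hE : ∀ i, Continuous fun t => E t i) (hb : 0 < b) (hK : 0 ≤ K)
    (hDE : ∀ s, 0 ≤ s → ∀ i, |D s i - E s i| ≤ K * Real.exp (b * s)) (ht : 0 ≤ t)
    (i j : Fin r) :
    |fullArrivals np f0 D i j t - fullArrivals np f0 E i j t| ≤
      np.mu i j / b * K * Real.exp (b * t) := by
  have hDi := hD i
  have hEi := hE i
  refine abs_expFilter_sub_le (np.mu_pos i j).le (by fun_prop) (by fun_prop) hb hK ht
    fun s hs => ?_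
  rw [add_sub_add_left_eq_sub, ← mul_sub, abs_mul, abs_of_nonneg (np.P_nonneg i j)]
  exact (mul_le_of_le_one_left (abs_nonneg _) (np.isRouting_P.le_one i j)).trans (hDE s hs.1 i)

lemma abs_emptyInput_sub_le (hQ : IsRouting Q) (hD : ∀ i, Continuous fun t => D t i)
    (hE : ∀ i, Continuous fun t => E t i) (hb : 0 < b) (hK : 0 ≤ K)
    (hDE : ∀ s, 0 ≤ s → ∀ i, |D s i - E s i| ≤ K * Real.exp (b * s)) (ht : 0 ≤ t)
    (i j : Fin r) :
    |emptyInput np Q e0 f0 D i j t - emptyInput np Q e0 f0 E i j t| ≤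
      np.totalRate / b * K * Real.exp (b * t) := by
  rw [emptyInput, emptyInput, add_sub_add_left_eq_sub, ← mul_sub, abs_mul,
    abs_of_nonneg (hQ.1 i j), ← Finset.sum_sub_distrib]
  calc Q i j * |∑ k, (fullArrivals np f0 D k i t - fullArrivals np f0 E k i t)|
      ≤ ∑ k, |fullArrivals np f0 D k i t - fullArrivals np f0 E k i t| :=
        (mul_le_of_le_one_left (abs_nonneg _) (hQ.le_one i j)).trans
          (Finset.abs_sum_le_sum_abs _ _)
    _ ≤ ∑ k, np.mu k i / b * K * Real.exp (b * t) :=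
        Finset.sum_le_sum fun k _ => abs_fullArrivals_sub_le hD hE hb hK hDE ht k i
    _ ≤ np.totalRate / b * K * Real.exp (b * t) :=
        np.sum_mu_div_mul_le hb.le hK (Real.exp_pos _).le i

lemma abs_emptyArrivals_sub_le (hQ : IsRouting Q) (hD : ∀ i, Continuous fun t => D t i)
    (hE : ∀ i, Continuous fun t => E t i) (hb : 0 < b) (hrate : np.totalRate ≤ b) (hK : 0 ≤ K)
    (hDE : ∀ s, 0 ≤ s → ∀ i, |D s i - E s i| ≤ K * Real.exp (b * s)) (ht : 0 ≤ t)
    (i j : Fin r) :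
    |emptyArrivals np Q e0 f0 D i j t - emptyArrivals np Q e0 f0 E i j t| ≤
      np.mu i j / b * K * Real.exp (b * t) := by
  refine abs_expFilter_sub_le (np.mu_pos i j).le (continuous_emptyInput hD i j)
    (continuous_emptyInput hE i j) hb hK ht fun s hs =>
      (abs_emptyInput_sub_le hQ hD hE hb hK hDE hs.1 i j).trans ?_
  exact mul_le_mul_of_nonneg_right
    (mul_le_of_le_one_left hK ((div_le_one hb).2 hrate)) (Real.exp_pos _).le

lemma abs_stationInput_sub_le (hQ : IsRouting Q) (hD : ∀ i, Continuous fun t => D t i)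
    (hE : ∀ i, Continuous fun t => E t i) (hb : 0 < b) (hrate : np.totalRate ≤ b) (hK : 0 ≤ K)
    (hDE : ∀ s, 0 ≤ s → ∀ i, |D s i - E s i| ≤ K * Real.exp (b * s)) (ht : 0 ≤ t)
    (i : Fin r) :
    |stationInput np Q e0 f0 D i t - stationInput np Q e0 f0 E i t| ≤
      2 * np.totalRate / b * K * Real.exp (b * t) := by
  have harrivals : |∑ j ∈ Finset.univ.filter (fun j => j ≠ i),
      (emptyArrivals np Q e0 f0 D j i t - emptyArrivals np Q e0 f0 E j i t)| ≤
      np.totalRate / b * K * Real.exp (b * t) :=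
    calc _ ≤ ∑ j ∈ Finset.univ.filter (fun j => j ≠ i), np.mu j i / b * K * Real.exp (b * t) :=
          (Finset.abs_sum_le_sum_abs _ _).trans <| Finset.sum_le_sum fun j _ =>
            abs_emptyArrivals_sub_le hQ hD hE hb hrate hK hDE ht j i
      _ ≤ ∑ j, np.mu j i / b * K * Real.exp (b * t) :=
          Finset.sum_le_sum_of_subset_of_nonneg (Finset.filter_subset _ _) fun j _ _ => by
            have := np.mu_pos j i
            positivity
      _ ≤ np.totalRate / b * K * Real.exp (b * t) :=
          np.sum_mu_div_mul_le hb.le hK (Real.exp_pos _).le i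
  rw [stationInput, stationInput, add_sub_add_comm, ← Finset.sum_sub_distrib]
  calc _ ≤ np.totalRate / b * K * Real.exp (b * t) + np.totalRate / b * K * Real.exp (b * t) :=
        (abs_add_le _ _).trans
          (add_le_add (abs_emptyInput_sub_le hQ hD hE hb hK hDE ht i i) harrivals)
    _ = 2 * np.totalRate / b * K * Real.exp (b * t) := by ring

lemma abs_departureMap_sub_le (hQ : IsRouting Q) (hD : ∀ i, Continuous fun t => D t i)
    (hE : ∀ i, Continuous fun t => E t i) (hb : 0 < b) (hrate : np.totalRate ≤ b) (hK : 0 ≤ K)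
    (hDE : ∀ s, 0 ≤ s → ∀ i, |D s i - E s i| ≤ K * Real.exp (b * s)) (t : ℝ) (i : Fin r) :
    |departureMap np Q e0 f0 D t i - departureMap np Q e0 f0 E t i| ≤
      2 * np.totalRate / b * K * Real.exp (b * max t 0) := by
  have hrate0 := np.totalRate_nonneg
  refine abs_queueOutput_sub_le (continuous_stationInput hD i).continuousOn
    (continuous_stationInput hE i).continuousOn fun s hs => (abs_stationInput_sub_le hQ hD hE hb
      hrate hK hDE hs.1 i).trans ?_
  gcongr
  exact hs.2

lemma dist_le_mul_contractionWeight (hD : D ∈ throughputPaths np.lam)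
    (hE : E ∈ throughputPaths np.lam) (t : ℝ) :
    dist (D t) (E t) ≤ (∑ i, np.lam i) * np.contractionWeight t := by
  have hlam (i : Fin r) : 0 ≤ np.lam i := (np.lam_pos i).le
  have hmax := le_max_right t 0
  have hweight : max t 0 ≤ np.contractionWeight t := by
    have h := Real.add_one_le_exp ((4 * np.totalRate + 1) * max t 0)
    rw [NetParams.contractionWeight]
    nlinarith [mul_nonneg np.totalRate_nonneg hmax]
  have hsum : 0 ≤ ∑ i, np.lam i := Finset.sum_nonneg fun i _ => hlam i
  refine (dist_pi_le_iff (mul_nonneg hsum (hmax.trans hweight))).2 fun i => ?_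
  calc dist (D t i) (E t i) ≤ np.lam i * max t 0 := (hD i).abs_sub_le (hE i) t
    _ ≤ (∑ i, np.lam i) * np.contractionWeight t :=
        mul_le_mul (Finset.single_le_sum (fun i _ => hlam i) (Finset.mem_univ i)) hweight hmax hsum

lemma dist_departureMap_le (hQ : IsRouting Q) (hD : D ∈ throughputPaths np.lam)
    (hE : E ∈ throughputPaths np.lam) (hK : 0 ≤ K)
    (hDE : ∀ t, dist (D t) (E t) ≤ K * np.contractionWeight t) (t : ℝ) :
    dist (departureMap np Q e0 f0 D t) (departureMap np Q e0 f0 E t) ≤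
      1 / 2 * K * np.contractionWeight t := by
  have hrate := np.totalRate_nonneg
  have hb : 0 < 4 * np.totalRate + 1 := by positivity
  have hDE' : ∀ s, 0 ≤ s → ∀ i,
      |D s i - E s i| ≤ K * Real.exp ((4 * np.totalRate + 1) * s) := fun s hs i => by
    simpa only [NetParams.contractionWeight, Real.dist_eq, max_eq_left hs] using
      (dist_le_pi_dist _ _ i).trans (hDE s)
  have hhalf : 2 * np.totalRate / (4 * np.totalRate + 1) ≤ 1 / 2 := by
    rw [div_le_div_iff₀ hb two_pos]
    linarith
  rw [NetParams.contractionWeight]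
  refine (dist_pi_le_iff (by positivity)).2 fun i => ?_
  refine (abs_departureMap_sub_le hQ (fun i => (hD i).continuous) (fun i => (hE i).continuous)
    hb (by linarith) hK hDE' t i).trans ?_
  gcongr

lemma existsUnique_isFixedPt_departureMap (np : NetParams r) (hQ : IsRouting Q)
    (h0 : MemT e0 f0) :
    ∃! D, D ∈ throughputPaths np.lam ∧ Function.IsFixedPt (departureMap np Q e0 f0) D :=
  existsUnique_isFixedPt_of_weighted_contraction (X := ℝ) (Y := Fin r → ℝ)
    (S := throughputPaths np.lam) (Φ := departureMap np Q e0 f0) (w := np.contractionWeight)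
    (C := ∑ i, np.lam i) (isClosed_throughputPaths _)
    ⟨fun _ _ => 0, fun i => isThroughput_zero (np.lam_pos i).le⟩
    (fun _ hD => departureMap_mem_throughputPaths hQ h0 (isCumulative_fullArrivals h0 hD))
    (Finset.sum_nonneg fun i _ => (np.lam_pos i).le) (by norm_num) (by norm_num)
    (fun _ hD _ hE => dist_le_mul_contractionWeight hD hE)
    (fun _ hD _ hE _ hK => dist_departureMap_le hQ hD hE hK)

end Contraction

/-! ### From fixed points to fluid model solutions -/

section FixedPoint

variable {np : NetParams r} {Q e0 f0 : Mat r} {D : ℝ → Fin r → ℝ} {t : ℝ} {i j : Fin r}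

lemma emptyCars_self : emptyCars np Q e0 f0 D t i i = stationInput np Q e0 f0 D i t - D t i :=
  if_pos rfl

lemma emptyCars_of_ne (hij : i ≠ j) :
    emptyCars np Q e0 f0 D t i j =
      emptyInput np Q e0 f0 D i j t - emptyArrivals np Q e0 f0 D i j t :=
  if_neg hij

lemma continuous_fullCars (hD : ∀ i, Continuous fun t => D t i) (i j : Fin r) :
    Continuous fun t => fullCars np f0 D t i j :=
  (continuous_const.add (continuous_const.mul (hD i))).sub (continuous_fullArrivals hD i j)

lemma continuous_emptyCars (hD : ∀ i, Continuous fun t => D t i) (i j : Fin r) :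
    Continuous fun t => emptyCars np Q e0 f0 D t i j := by
  unfold emptyCars
  split_ifs
  · exact (continuous_stationInput hD i).sub (hD i)
  · exact (continuous_emptyInput hD i j).sub (continuous_emptyArrivals hD i j)

lemma fullCars_zero (hD : D ∈ throughputPaths np.lam) : fullCars np f0 D 0 = f0 := by
  ext i j
  simp [fullCars, fullArrivals, (hD i).eq_zero 0 le_rfl]

lemma emptyCars_zero (hD : D ∈ throughputPaths np.lam) : emptyCars np Q e0 f0 D 0 = e0 := by
  ext i j
  by_cases hij : i = j
  · subst hij
    simp [emptyCars_self, stationInput, emptyInput, emptyArrivals, fullArrivals,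
      (hD i).eq_zero 0 le_rfl]
  · simp [emptyCars_of_ne hij, emptyInput, emptyArrivals, fullArrivals]

lemma mul_integral_fullCars (hD : ∀ i, Continuous fun t => D t i) (i j : Fin r) (t : ℝ) :
    np.mu i j * ∫ s in (0 : ℝ)..t, fullCars np f0 D s i j = fullArrivals np f0 D i j t :=
  mul_integral_sub_expFilter _ (continuous_const.add (continuous_const.mul (hD i))) t

lemma mul_integral_emptyCars (hD : ∀ i, Continuous fun t => D t i) (hij : i ≠ j) (t : ℝ) :
    np.mu i j * ∫ s in (0 : ℝ)..t, emptyCars np Q e0 f0 D s i j =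
      emptyArrivals np Q e0 f0 D i j t := by
  simp only [emptyCars_of_ne hij]
  exact mul_integral_sub_expFilter _ (continuous_emptyInput hD i j) t

lemma emptyCars_eq_add_ite (i j : Fin r) (t : ℝ) :
    emptyCars np Q e0 f0 D t i j =
      emptyInput np Q e0 f0 D i j t - emptyArrivals np Q e0 f0 D i j t +
        if i = j then ∑ k, emptyArrivals np Q e0 f0 D k i t - D t i else 0 := by
  by_cases hij : i = j
  · subst hij
    rw [if_pos rfl, emptyCars_self, stationInput, Finset.filter_ne',
      Finset.sum_erase_eq_sub (Finset.mem_univ i)]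
    ring
  · rw [if_neg hij, emptyCars_of_ne hij, add_zero]

lemma sum_emptyCars (t : ℝ) :
    ∑ i, ∑ j, emptyCars np Q e0 f0 D t i j =
      ∑ i, ∑ j, emptyInput np Q e0 f0 D i j t - ∑ i, D t i := by
  simp only [emptyCars_eq_add_ite, Finset.sum_add_distrib, Finset.sum_sub_distrib,
    Finset.sum_ite_eq, Finset.mem_univ, if_true]
  rw [Finset.sum_comm (f := fun i j => emptyArrivals np Q e0 f0 D j i t)]
  ring

lemma sum_emptyInput (hQ : IsRouting Q) (t : ℝ) :
    ∑ i, ∑ j, emptyInput np Q e0 f0 D i j t =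
      ∑ i, ∑ j, e0 i j + ∑ i, ∑ j, fullArrivals np f0 D i j t := by
  simp only [emptyInput, Finset.sum_add_distrib, ← Finset.sum_mul, hQ.2, one_mul]
  rw [Finset.sum_comm (f := fun i k => fullArrivals np f0 D k i t)]

lemma sum_fullCars (t : ℝ) :
    ∑ i, ∑ j, fullCars np f0 D t i j =
      ∑ i, ∑ j, f0 i j + ∑ i, D t i - ∑ i, ∑ j, fullArrivals np f0 D i j t := by
  simp only [fullCars, Finset.sum_sub_distrib, Finset.sum_add_distrib, ← Finset.sum_mul,
    np.P_rowsum, one_mul]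

lemma sum_emptyCars_add_fullCars (hQ : IsRouting Q) (h0 : MemT e0 f0) (t : ℝ) :
    ∑ i, ∑ j, (emptyCars np Q e0 f0 D t i j + fullCars np f0 D t i j) = 1 := by
  have hinit := h0.2.2
  simp only [Finset.sum_add_distrib] at hinit ⊢
  rw [sum_emptyCars, sum_emptyInput hQ, sum_fullCars]
  linarith

lemma fullCars_nonneg (h0 : MemT e0 f0) (hD : D ∈ throughputPaths np.lam) (ht : 0 ≤ t)
    (i j : Fin r) : 0 ≤ fullCars np f0 D t i j :=
  sub_nonneg.2 ((isCumulative_fullInput h0 hD i j).expFilter_le (np.mu_pos i j).le ht)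

lemma eq_queueOutput_of_isFixedPt (hfix : Function.IsFixedPt (departureMap np Q e0 f0) D) (t : ℝ)
    (i : Fin r) : D t i = queueOutput (np.lam i) (stationInput np Q e0 f0 D i) t :=
  (congrFun₂ hfix t i).symm

lemma emptyCars_nonneg_of_isFixedPt (hQ : IsRouting Q) (h0 : MemT e0 f0)
    (hD : D ∈ throughputPaths np.lam)
    (hfix : Function.IsFixedPt (departureMap np Q e0 f0) D) (ht : 0 ≤ t) (i j : Fin r) :
    0 ≤ emptyCars np Q e0 f0 D t i j := by
  have hF := isCumulative_fullArrivals h0 hD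
  by_cases hij : i = j
  · subst hij
    rw [emptyCars_self, sub_nonneg, eq_queueOutput_of_isFixedPt hfix]
    exact queueOutput_le (isCumulative_stationInput hQ h0 hF i).continuous.continuousOn ht
  · rw [emptyCars_of_ne hij, sub_nonneg]
    exact (isCumulative_emptyInput hQ h0 hF i j).expFilter_le (np.mu_pos i j).le ht

lemma flatWherePos_emptyCars_of_isFixedPt (hD : ∀ i, Continuous fun t => D t i)
    (hfix : Function.IsFixedPt (departureMap np Q e0 f0) D) (i : Fin r) :
    FlatWherePos (fun s => emptyCars np Q e0 f0 D s i i)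
      (idleTime (np.lam i) fun t => D t i) := by
  have hout : queueOutput (np.lam i) (stationInput np Q e0 f0 D i) = fun t => D t i :=
    funext fun t => (eq_queueOutput_of_isFixedPt hfix t i).symm
  have hflat := flatWherePos_idleTime_queueOutput (np.lam_pos i).ne'
    (continuous_stationInput (np := np) (Q := Q) (e0 := e0) (f0 := f0) hD i).continuousOn
  simpa only [hout, emptyCars_self] using hflat

lemma isFluidSol_of_isFixedPt (hQ : IsRouting Q) (h0 : MemT e0 f0)
    (hD : D ∈ throughputPaths np.lam)
    (hfix : Function.IsFixedPt (departureMap np Q e0 f0) D) :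
    IsFluidSol np Q (emptyCars np Q e0 f0 D) (fullCars np f0 D)
      (fun t i => idleTime (np.lam i) (fun t => D t i) t) := by
  have hDc (i : Fin r) : Continuous fun t => D t i := (hD i).continuous
  constructor
  case cont_e => exact fun i j => (continuous_emptyCars hDc i j).continuousOn
  case cont_f => exact fun i j => (continuous_fullCars hDc i j).continuousOn
  case mem_T =>
    exact fun t ht => MemT.of_nonneg (emptyCars_nonneg_of_isFixedPt hQ h0 hD hfix ht)
      (fullCars_nonneg h0 hD ht) (sum_emptyCars_add_fullCars hQ h0 t)
  case u_nonneg => exact fun t i => (hD i).idleTime_nonneg (np.lam_pos i) t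
  case u_mono => exact fun i => (hD i).monotone_idleTime (np.lam_pos i)
  case u_zero => exact fun i t ht => (hD i).idleTime_eq_zero ht
  case eq_f =>
    intro i j t ht
    rw [mul_integral_fullCars hDc, fullCars_zero hD, fullCars,
      ← mul_sub_idleTime (d := fun t => D t i) (np.lam_pos i).ne' ht]
    ring
  case eq_e_off =>
    intro i j hij t _
    rw [mul_integral_emptyCars hDc hij, emptyCars_zero hD, emptyCars_of_ne hij]
    simp only [mul_integral_fullCars hDc, emptyInput]
    ring
  case eq_e_diag =>
    intro i t ht
    rw [Finset.sum_congr rfl fun j hj => mul_integral_emptyCars hDc (Finset.mem_filter.1 hj).2 t,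
      emptyCars_zero hD, mul_sub_idleTime (d := fun t => D t i) (np.lam_pos i).ne' ht]
    simp only [mul_integral_fullCars hDc, emptyCars_self, stationInput, emptyInput]
    ring
  case compl =>
    exact fun i => (lintegral_lsMeasure_eq_zero_iff_flatWherePos
      ((hD i).monotone_idleTime (np.lam_pos i)) (hD i).continuous_idleTime
      (fun t ht => (hD i).idleTime_eq_zero ht) (continuous_emptyCars hDc i i).continuousOn).2
      (flatWherePos_emptyCars_of_isFixedPt hDc hfix i)

end FixedPoint

/-! ### From fluid model solutions to fixed points -/

/-- Cumulative departures `λ_i (t - u_i t)` of full cars when `u t i` is the idle time at `i`. -/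
def departures (np : NetParams r) (u : ℝ → Fin r → ℝ) (t : ℝ) (i : Fin r) : ℝ :=
  np.lam i * (max t 0 - u t i)

lemma idleTime_departures (np : NetParams r) (u : ℝ → Fin r → ℝ) (t : ℝ) (i : Fin r) :
    idleTime (np.lam i) (fun t => departures np u t i) t = u t i := by
  have := (np.lam_pos i).ne'
  simp only [idleTime, departures]
  field_simp
  ring

lemma departures_of_nonneg {np : NetParams r} {u : ℝ → Fin r → ℝ} {t : ℝ} (ht : 0 ≤ t) (i : Fin r) :
    departures np u t i = np.lam i * (t - u t i) := by
  rw [departures, max_eq_left ht]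

namespace IsFluidSol

variable {np : NetParams r} {Q : Mat r} {e f : ℝ → Mat r} {u : ℝ → Fin r → ℝ} {t : ℝ}

-- Summing the equations for `f i j` over `j` expresses `u i` through the continuous functions `f`.
lemma continuousOn_u (h : IsFluidSol np Q e f u) (i : Fin r) :
    ContinuousOn (fun t => u t i) (Set.Ici 0) := by
  have hsum : ∀ t, 0 ≤ t → u t i = t - (∑ j, (f t i j - f 0 i j +
      np.mu i j * ∫ s in (0 : ℝ)..t, f s i j)) / np.lam i := fun t ht => by
    have hterm : ∀ j, f t i j - f 0 i j + np.mu i j * ∫ s in (0 : ℝ)..t, f s i j =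
        np.P i j * (np.lam i * (t - u t i)) := fun j => by linarith [h.eq_f i j t ht]
    have := (np.lam_pos i).ne'
    simp only [hterm, ← Finset.sum_mul, np.P_rowsum, one_mul]
    field_simp
    ring
  refine ContinuousOn.congr (continuousOn_id.sub (ContinuousOn.div_const (continuousOn_finsetSum _
    fun j _ => ?_) _)) hsum
  exact ((h.cont_f i j).sub continuousOn_const).add
    (continuousOn_const.mul (continuousOn_primitive_Ici (h.cont_f i j)))

lemma continuous_u (h : IsFluidSol np Q e f u) (i : Fin r) : Continuous fun t => u t i := by
  have hcont : Continuous fun t => u (max t 0) i :=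
    (h.continuousOn_u i).comp_continuous (continuous_id.max continuous_const) fun t =>
      le_max_right t 0
  simpa only [apply_max_zero (h.u_zero i)] using hcont

lemma continuous_departures (h : IsFluidSol np Q e f u) (i : Fin r) :
    Continuous fun t => departures np u t i :=
  ((continuous_id.max continuous_const).sub (h.continuous_u i)).const_mul (np.lam i)

lemma mul_integral_f (h : IsFluidSol np Q e f u) (ht : 0 ≤ t) (i j : Fin r) :
    np.mu i j * ∫ s in (0 : ℝ)..t, f s i j = fullArrivals np (f 0) (departures np u) i j t := by
  have hinput : Continuous fun t => f 0 i j + np.P i j * departures np u t i :=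
    continuous_const.add (continuous_const.mul (h.continuous_departures i))
  refine mul_integral_eq_expFilter (h.cont_f i j) hinput.continuousOn (fun s hs => ?_) ht
  rw [departures_of_nonneg hs]
  linarith [h.eq_f i j s hs]

lemma eq_fullCars (h : IsFluidSol np Q e f u) (ht : 0 ≤ t) :
    f t = fullCars np (f 0) (departures np u) t := by
  ext i j
  rw [fullCars, departures_of_nonneg ht, ← h.mul_integral_f ht]
  linarith [h.eq_f i j t ht]

lemma eq_emptyInput_sub (h : IsFluidSol np Q e f u) {i j : Fin r} (hij : i ≠ j) (ht : 0 ≤ t) :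
    e t i j = emptyInput np Q (e 0) (f 0) (departures np u) i j t -
      np.mu i j * ∫ s in (0 : ℝ)..t, e s i j := by
  simp only [emptyInput, ← h.mul_integral_f ht]
  linarith [h.eq_e_off i j hij t ht]

lemma mul_integral_e (h : IsFluidSol np Q e f u) {i j : Fin r} (hij : i ≠ j) (ht : 0 ≤ t) :
    np.mu i j * ∫ s in (0 : ℝ)..t, e s i j =
      emptyArrivals np Q (e 0) (f 0) (departures np u) i j t :=
  mul_integral_eq_expFilter (h.cont_e i j)
    (continuous_emptyInput h.continuous_departures i j).continuousOn
    (fun _ hs => h.eq_emptyInput_sub hij hs) ht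

lemma e_self_eq (h : IsFluidSol np Q e f u) (ht : 0 ≤ t) (i : Fin r) :
    e t i i = stationInput np Q (e 0) (f 0) (departures np u) i t - np.lam i * (t - u t i) := by
  rw [h.eq_e_diag i t ht, Finset.sum_congr rfl fun j hj =>
    h.mul_integral_e (Finset.mem_filter.1 hj).2 ht]
  simp only [h.mul_integral_f ht, stationInput, emptyInput]
  ring

lemma eq_emptyCars (h : IsFluidSol np Q e f u) (ht : 0 ≤ t) :
    e t = emptyCars np Q (e 0) (f 0) (departures np u) t := by
  ext i j
  by_cases hij : i = j
  · subst hij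
    rw [emptyCars_self, departures_of_nonneg ht, h.e_self_eq ht]
  · rw [emptyCars_of_ne hij, ← h.mul_integral_e hij ht, h.eq_emptyInput_sub hij ht]

lemma isCumulative_fullArrivals (h : IsFluidSol np Q e f u) (i j : Fin r) :
    IsCumulative (fullArrivals np (f 0) (departures np u) i j) where
  continuous := continuous_fullArrivals h.continuous_departures i j
  zero_nonneg := (expFilter_zero _ _).ge
  monotoneOn s hs t ht hst := by
    rw [← h.mul_integral_f hs, ← h.mul_integral_f ht]
    refine mul_le_mul_of_nonneg_left ?_ (np.mu_pos i j).le
    refine intervalIntegral.integral_mono_interval le_rfl hs hst ?_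
      (intervalIntegrable_of_continuousOn_Ici (h.cont_f i j) ht)
    exact (ae_restrict_iff' measurableSet_Ioc).2 <| Eventually.of_forall fun v hv =>
      ((h.mem_T v hv.1.le).2.1 i j).1

lemma flatWherePos_u (h : IsFluidSol np Q e f u) (i : Fin r) :
    FlatWherePos (fun s => e s i i) fun s => u s i :=
  (lintegral_lsMeasure_eq_zero_iff_flatWherePos (h.u_mono i) (h.continuous_u i) (h.u_zero i)
    (h.cont_e i i)).1 (h.compl i)

lemma isFixedPt_departures (h : IsFluidSol np Q e f u) :
    Function.IsFixedPt (departureMap np Q (e 0) (f 0)) (departures np u) := by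
  have hqueue : ∀ t, 0 ≤ t → ∀ i, departures np u t i =
      departureMap np Q (e 0) (f 0) (departures np u) t i := fun t ht i => by
    rw [departures_of_nonneg ht, departureMap]
    refine eq_queueOutput_of_flatWherePos (np.lam_pos i).le
      (continuous_stationInput h.continuous_departures i).continuousOn (h.continuousOn_u i)
      ((h.u_mono i).monotoneOn _) (h.u_zero i 0 le_rfl) (fun s hs => ?_) ?_ ht
    · rw [← h.e_self_eq hs]
      exact ((h.mem_T s hs).1 i i).1
    · intro a b ha hab hpos
      exact h.flatWherePos_u i ha hab fun s hs =>
        (hpos s hs).trans_eq (h.e_self_eq (ha.trans hs.1.le) i).symm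
  funext t i
  have hmax := (hqueue _ (le_max_right t 0) i).symm
  simpa only [departureMap, departures, queueOutput, apply_max_zero (h.u_zero i), max_assoc,
    max_self] using hmax

lemma departures_mem_throughputPaths (h : IsFluidSol np Q e f u) (hQ : IsRouting Q) :
    departures np u ∈ throughputPaths np.lam :=
  h.isFixedPt_departures ▸
    departureMap_mem_throughputPaths hQ (h.mem_T 0 le_rfl) h.isCumulative_fullArrivals

end IsFluidSol

end Network

/-- Theorem 3 (existence and uniqueness of the fluid model solution): for every
initial condition in 𝒯 there is exactly one fluid model solution. -/
theorem stmt_9 {r : ℕ} (hr : 1 ≤ r) (np : NetParams r)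
    (Q : Mat r) (hQ : IsRouting Q)
    (e0 f0 : Mat r) (h0 : MemT e0 f0) :
    ∃ (e f : ℝ → Mat r) (u : ℝ → Fin r → ℝ),
      IsFluidSol np Q e f u ∧ e 0 = e0 ∧ f 0 = f0 ∧
      ∀ (e' f' : ℝ → Mat r) (u' : ℝ → Fin r → ℝ),
        IsFluidSol np Q e' f' u' → e' 0 = e0 → f' 0 = f0 →
        ∀ t, 0 ≤ t → e' t = e t ∧ f' t = f t ∧ u' t = u t := by
  obtain ⟨D, ⟨hD, hfix⟩, hunique⟩ := existsUnique_isFixedPt_departureMap np hQ h0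
  refine ⟨emptyCars np Q e0 f0 D, fullCars np f0 D,
    fun t i => idleTime (np.lam i) (fun t => D t i) t,
    isFluidSol_of_isFixedPt hQ h0 hD hfix, emptyCars_zero hD, fullCars_zero hD, ?_⟩
  rintro e' f' u' h rfl rfl t ht
  obtain rfl : departures np u' = D :=
    hunique _ ⟨h.departures_mem_throughputPaths hQ, h.isFixedPt_departures⟩
  exact ⟨h.eq_emptyCars ht, h.eq_fullCars ht, funext fun i => (idleTime_departures np u' t i).symm⟩
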